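/- Let K be an algebraically closed field of characteristic zero and B a finitely generated commutative K-algebra that is an integral domain and is rigid. Then HD*(B[u]) equals the image of B in B[u] under the constant embedding. -/

import Mathlib

/-!
Every locally nilpotent derivation `D` of `B[u]` kills the constants when `B` is a rigid finitely
generated domain; if moreover `D` has a slice, then `D u ≠ 0`, and `D f = f' * D u` forces
`ker D = B`.

To see that `D` kills `B`, grade `B[u]` by the degree in `u`. As `B` is finitely generated, `D`
raises degrees by a bounded amount (`exists_degBound`). If it raises them by at most `m ≥ 0`,
its part of degree `m` is a homogeneous derivation
`E = u ^ m δ + c u ^ (m + 1) d/du`, where `δ` is a derivation of `B` and `c ∈ B`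
(`topPart`). Iterates of `E` compute the top coefficients of iterates of `D`, so `E` is again
locally nilpotent (`isLND_topPart`). Now `u` divides `E u`, which in a domain of characteristic
zero forces `E u = 0` (`eq_zero_of_dvd`), that is, `c = 0`. Hence `E ^ n b = u ^ (m n) δ ^ n b`
for `b ∈ B`, so `δ` is locally nilpotent, and `δ = 0` by rigidity. Thus `E = 0` and the bound
`m` can be lowered. Descending, `D` lowers degrees, and in particular kills `B`.
-/

/-- A K-derivation is locally nilpotent (an LND) if for every element `a`
there exists `n ≥ 1` with `D^[n] a = 0`. -/
def IsLND {K A : Type*} [CommRing K] [CommRing A] [Algebra K A]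
    (D : Derivation K A A) : Prop :=
  ∀ a : A, ∃ n : ℕ, 1 ≤ n ∧ (⇑D)^[n] a = 0

/-- The modified Derksen invariant `HD*(A)`: the K-subalgebra of `A` generated by
the union of the kernels of all LNDs of `A` that possess a slice. -/
def HDStar (K A : Type*) [CommRing K] [CommRing A] [Algebra K A] : Subalgebra K A :=
  Algebra.adjoin K {a : A | ∃ D : Derivation K A A, IsLND D ∧ (∃ s : A, D s = 1) ∧ D a = 0}

open Polynomial

/-! ### Locally nilpotent derivations of domains -/

section LND

variable {K A : Type*} [CommRing K] [CommRing A] [Algebra K A]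

lemma iterate_derivation_mul (D : Derivation K A A) (n : ℕ) (a b : A) :
    (⇑D)^[n] (a * b) = ∑ p ∈ Finset.HasAntidiagonal.antidiagonal n,
      n.choose p.1 • ((⇑D)^[p.1] a * (⇑D)^[p.2] b) := by
  induction n with
  | zero => simp
  | succ n ih =>
    rw [Finset.sum_antidiagonal_choose_succ_nsmul
      (fun i j => (⇑D)^[i] a * (⇑D)^[j] b) n, Function.iterate_succ_apply', ih, map_sum,
      ← Finset.sum_add_distrib]
    refine Finset.sum_congr rfl fun p hp => ?_
    have h : n.choose p.2 = n.choose p.1 := by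
      have := Finset.HasAntidiagonal.mem_antidiagonal.1 hp
      exact (Nat.choose_symm_of_eq_add this.symm).symm
    simp only [map_nsmul, Derivation.leibniz, Function.iterate_succ_apply', smul_eq_mul, h]
    rw [nsmul_add]
    ring_nf

lemma iterate_eq_zero_of_le (D : Derivation K A A) {a : A} {m n : ℕ} (h : (⇑D)^[m] a = 0)
    (hmn : m ≤ n) : (⇑D)^[n] a = 0 := by
  obtain ⟨k, rfl⟩ := Nat.exists_eq_add_of_le' hmn
  rw [Function.iterate_add_apply, h, iterate_map_zero]

/-- A nonzero element has a last nonzero iterate under a locally nilpotent derivation. -/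
lemma IsLND.exists_last {D : Derivation K A A} (hD : IsLND D) {a : A} (ha : a ≠ 0) :
    ∃ n, (⇑D)^[n] a ≠ 0 ∧ (⇑D)^[n + 1] a = 0 := by
  classical
  have hex : ∃ n, (⇑D)^[n] a = 0 := (hD a).imp fun _ h => h.2
  have hpos : Nat.find hex ≠ 0 := fun h => ha (by simpa [h] using Nat.find_spec hex)
  obtain ⟨k, hk⟩ := Nat.exists_eq_succ_of_ne_zero hpos
  exact ⟨k, Nat.find_min hex (by omega), by have := Nat.find_spec hex; rwa [hk] at this⟩

/-- With `n` and `j` the last nonzero orders of `u` and `v`, where `D u = u * v`, the Leibniz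
formula shows that `D ^ (n + j)` does not kill `u * v`, although `D ^ (n + 1)` kills `u`. -/
lemma IsLND.eq_zero_of_dvd [IsDomain A] [CharZero A] {D : Derivation K A A} (hD : IsLND D) {u : A}
    (h : u ∣ D u) : D u = 0 := by
  obtain ⟨v, hv⟩ := h
  by_contra hne
  have hu : u ≠ 0 := by rintro rfl; simp at hne
  have hv0 : v ≠ 0 := by rintro rfl; simp [hv] at hne
  obtain ⟨n, hn, hn'⟩ := hD.exists_last hu
  obtain ⟨j, hj, hj'⟩ := hD.exists_last hv0
  have h0 : (⇑D)^[n + j] (u * v) = 0 := by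
    rw [← hv, ← Function.iterate_succ_apply]
    exact iterate_eq_zero_of_le D hn' (by omega)
  rw [iterate_derivation_mul, Finset.sum_eq_single (n, j)] at h0
  · have : (n + j).choose n ≠ 0 := (Nat.choose_pos (by omega)).ne'
    simp_all
  · rintro ⟨p, q⟩ hp hpq
    have hs := Finset.HasAntidiagonal.mem_antidiagonal.1 hp
    simp only at hs ⊢
    rcases lt_trichotomy p n with hlt | rfl | hlt
    · rw [iterate_eq_zero_of_le D hj' (by omega : j + 1 ≤ q)]; simp
    · exact absurd (by rw [show q = j by omega]) hpq
    · rw [iterate_eq_zero_of_le D hn' (by omega : n + 1 ≤ p)]; simp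
  · intro h; simp at h

end LND

/-! ### Derivations of `B[X]` and their degree in `X` -/

section Poly

variable {K B : Type*} [CommRing K] [CommRing B] [Algebra K B]

/-- `D` raises degrees in `X` by less than `N`, as tested on constants and on `X`. -/
def DegBound (D : Derivation K B[X] B[X]) (N : ℕ) : Prop :=
  (∀ b, ∀ j, N ≤ j → (D (C b)).coeff j = 0) ∧ ∀ j, N + 1 ≤ j → (D X).coeff j = 0

/-- By the Leibniz rule the bound on constants and on `X` extends to all polynomials. -/
lemma DegBound.coeff_eq_zero {D : Derivation K B[X] B[X]} {N : ℕ} (h : DegBound D N) (f : B[X])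
    (k : ℕ) (hf : f.natDegree ≤ k) (j : ℕ) (hj : k + N ≤ j) : (D f).coeff j = 0 := by
  refine induction_with_natDegree_le (fun f => (D f).coeff j = 0) k (by simp)
    (fun n b _ hn => ?_) (fun f g _ _ h1 h2 => by simp [h1, h2]) f hf
  · show (D (C b * X ^ n)).coeff j = 0
    have h1 : (X ^ n * D (C b)).coeff j = 0 := by
      obtain ⟨i, rfl⟩ : ∃ i, j = i + n := ⟨j - n, by omega⟩
      rw [mul_comm, coeff_mul_X_pow]
      exact h.1 b i (by omega)
    have h2 : (C b * ((n : B[X]) * (X ^ (n - 1) * D X))).coeff j = 0 := by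
      rcases Nat.eq_zero_or_pos n with rfl | hn0
      · simp
      · obtain ⟨i, rfl⟩ : ∃ i, j = i + (n - 1) := ⟨j - (n - 1), by omega⟩
        rw [coeff_C_mul, ← C_eq_natCast, coeff_C_mul, mul_comm (X ^ _), coeff_mul_X_pow,
          h.2 i (by omega)]
        simp
    simp only [Derivation.leibniz, Derivation.leibniz_pow, smul_eq_mul, nsmul_eq_mul, coeff_add]
    rw [h1, h2, add_zero]

/-- Finite generation of `B` is what makes the degrees `deg (D b)`, `b ∈ B`, bounded. -/
lemma exists_degBound [Algebra.FiniteType K B] (D : Derivation K B[X] B[X]) :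
    ∃ N, DegBound D N := by
  obtain ⟨S, hS⟩ := Algebra.FiniteType.out (R := K) (A := B)
  let M := S.sup fun g => (D (C g)).natDegree
  refine ⟨M + (D X).natDegree + 1, fun b j hj => ?_, fun j hj =>
    coeff_eq_zero_of_natDegree_lt (by omega)⟩
  have hb : b ∈ Algebra.adjoin K (S : Set B) := by rw [hS]; trivial
  induction hb using Algebra.adjoin_induction with
  | mem g hg =>
    have : (D (C g)).natDegree ≤ M := Finset.le_sup (f := fun g => (D (C g)).natDegree) hg
    exact coeff_eq_zero_of_natDegree_lt (by omega)
  | algebraMap r =>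
    have : D (C (algebraMap K B r)) = 0 := D.map_algebraMap r
    simp [this]
  | add x y _ _ hx hy => simp [hx, hy]
  | mul x y _ _ hx hy => simp [hx, hy, C_mul]

/-- The derivation `b ↦ coeff_m (D b)` of the coefficient ring. -/
noncomputable def coeffDer (D : Derivation K B[X] B[X]) (m : ℕ) : Derivation K B B :=
  Derivation.mk'
    { toFun := fun b => (D (C b)).coeff m
      map_add' := by simp
      map_smul' := fun r b => by simp [← smul_C] }
    (by simp [C_mul])

lemma coeffDer_apply (D : Derivation K B[X] B[X]) (m : ℕ) (b : B) :
    coeffDer D m b = (D (C b)).coeff m := rfl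

/-- The homogeneous part of degree `m` of `D` for the grading by the degree in `X`, on which
`coeffDer D m` acts coefficientwise. -/
noncomputable def topPart (D : Derivation K B[X] B[X]) (m : ℕ) : Derivation K B[X] B[X] :=
  (X ^ m : B[X]) • (PolynomialModule.equivPolynomialSelf (R := B)).toLinearMap.compDer
    (coeffDer D m).mapCoeffs +
  (C ((D X).coeff (m + 1)) * X ^ (m + 1)) • (derivative' (R := B)).restrictScalars K

lemma topPart_monomial (D : Derivation K B[X] B[X]) (m k : ℕ) (b : B) :
    topPart D m (monomial k b) =
      monomial (k + m) (coeffDer D m b + k * ((D X).coeff (m + 1) * b)) := by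
  have h1 : (PolynomialModule.equivPolynomialSelf (R := B)).toLinearMap.compDer
      (coeffDer D m).mapCoeffs (monomial k b) = monomial k (coeffDer D m b) := by
    simp
  have h2 : C ((D X).coeff (m + 1)) * X ^ (m + 1) * derivative (monomial k b) =
      monomial (k + m) (k * ((D X).coeff (m + 1) * b)) := by
    rw [derivative_monomial, C_mul_X_pow_eq_monomial, monomial_mul_monomial]
    rcases Nat.eq_zero_or_pos k with rfl | hk
    · simp
    · rw [show m + 1 + (k - 1) = k + m by omega]
      congr 1
      ring
  rw [topPart, Derivation.add_apply, Derivation.smul_apply, h1, Derivation.smul_apply,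
    Derivation.restrictScalars_apply, derivative'_apply, smul_eq_mul, smul_eq_mul, h2,
    X_pow_mul_monomial, map_add]

lemma topPart_C (D : Derivation K B[X] B[X]) (m : ℕ) (b : B) :
    topPart D m (C b) = monomial m (coeffDer D m b) := by
  simpa using topPart_monomial D m 0 b

lemma topPart_X (D : Derivation K B[X] B[X]) (m : ℕ) :
    topPart D m X = monomial (m + 1) ((D X).coeff (m + 1)) := by
  have h := topPart_monomial D m 1 1
  rw [coeffDer_apply, C_1, D.map_one_eq_zero, monomial_one_one_eq_X] at h
  simpa only [coeff_zero, Nat.cast_one, one_mul, mul_one, zero_add, add_comm 1 m] using h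

lemma degBound_sub_topPart {D : Derivation K B[X] B[X]} {m : ℕ} (h : DegBound D (m + 1)) :
    DegBound (D - topPart D m) m := by
  refine ⟨fun b j hj => ?_, fun j hj => ?_⟩
  · rw [Derivation.sub_apply, coeff_sub, topPart_C, coeff_monomial, coeffDer_apply]
    rcases hj.eq_or_lt with rfl | hlt
    · simp
    · simp [hlt.ne, h.1 b j hlt]
  · rw [Derivation.sub_apply, coeff_sub, topPart_X, coeff_monomial]
    rcases hj.eq_or_lt with rfl | hlt
    · simp
    · simp [hlt.ne, h.2 j hlt]

/-! ### Local nilpotency of the top part and the descent -/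

/-- Iterates of the top part compute top coefficients of iterates. -/
lemma iterate_topPart {D : Derivation K B[X] B[X]} {m : ℕ} (h : DegBound D (m + 1)) (k : ℕ)
    (b : B) (n : ℕ) :
    ((⇑D)^[n] (monomial k b)).natDegree ≤ k + n * m ∧
    (⇑(topPart D m))^[n] (monomial k b) =
      monomial (k + n * m) (((⇑D)^[n] (monomial k b)).coeff (k + n * m)) := by
  induction n with
  | zero => simpa using natDegree_monomial_le b
  | succ n ih =>
    obtain ⟨hd, he⟩ := ih
    simp only [Function.iterate_succ_apply']
    set f := (⇑D)^[n] (monomial k b)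
    set d := k + n * m with hdd
    have hk : k + (n + 1) * m = d + m := by rw [hdd]; ring
    rw [hk]
    refine ⟨natDegree_le_iff_coeff_eq_zero.2 fun j hj => h.coeff_eq_zero f d hd j (by omega), ?_⟩
    rw [he]
    -- `f` and its top monomial differ in degree `< d`, and `D` and `topPart D m` differ in
    -- degree `< m`; neither difference is seen by the coefficient of degree `d + m`.
    have h1 : (D (monomial d (f.coeff d))).coeff (d + m) = (D f).coeff (d + m) := by
      rw [← sub_eq_zero, ← coeff_sub, ← map_sub]
      rcases Nat.eq_zero_or_pos d with h0 | hpos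
      · rw [h0] at hd ⊢
        rw [monomial_zero_left, ← eq_C_of_natDegree_le_zero hd]
        simp
      · refine h.coeff_eq_zero _ (d - 1) (natDegree_le_iff_coeff_eq_zero.2 fun j hj => ?_) _
          (by omega)
        rw [coeff_sub, coeff_monomial]
        split_ifs with hdj
        · simp [hdj]
        · rw [coeff_eq_zero_of_natDegree_lt (p := f) (by omega), sub_zero]
    have h2 := (degBound_sub_topPart h).coeff_eq_zero (monomial d (f.coeff d)) d
      (natDegree_monomial_le _) (d + m) le_rfl
    rw [Derivation.sub_apply, coeff_sub, h1, sub_eq_zero] at h2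
    rw [h2, topPart_monomial, coeff_monomial_same]

lemma isLND_topPart {D : Derivation K B[X] B[X]} (hD : IsLND D) {m : ℕ}
    (h : DegBound D (m + 1)) : IsLND (topPart D m) := by
  intro f
  induction f using Polynomial.induction_on' with
  | add f g hf hg =>
    obtain ⟨a, ha, ha'⟩ := hf
    obtain ⟨b, hb, hb'⟩ := hg
    refine ⟨a + b, by omega, ?_⟩
    rw [iterate_map_add, iterate_eq_zero_of_le _ ha' (by omega),
      iterate_eq_zero_of_le _ hb' (by omega), add_zero]
  | monomial k b =>
    obtain ⟨n, hn, hn'⟩ := hD (monomial k b)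
    exact ⟨n, hn, by rw [(iterate_topPart h k b n).2, hn']; simp⟩

/-- The descent step: for rigid `B` the top part of `D` in nonnegative degree vanishes. -/
lemma DegBound.descend [IsDomain B] [CharZero B]
    (hrigid : ∀ D : Derivation K B B, IsLND D → D = 0)
    {D : Derivation K B[X] B[X]} (hD : IsLND D) {m : ℕ} (h : DegBound D (m + 1)) :
    DegBound D m := by
  have hE := isLND_topPart hD h
  have hX : topPart D m X = 0 := hE.eq_zero_of_dvd (by
    rw [topPart_X, ← C_mul_X_pow_eq_monomial, pow_succ, ← mul_assoc]
    exact dvd_mul_left _ _)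
  have hc : (D X).coeff (m + 1) = 0 := by simpa [topPart_X] using hX
  have hiter : ∀ b n, (⇑(topPart D m))^[n] (C b) =
      monomial (n * m) ((⇑(coeffDer D m))^[n] b) := by
    intro b n
    induction n with
    | zero => simp
    | succ n ih =>
      rw [Function.iterate_succ_apply', ih, topPart_monomial, hc, Function.iterate_succ_apply']
      simp [add_mul]
  have hδ : coeffDer D m = 0 := hrigid _ fun b => by
    obtain ⟨n, hn, hn'⟩ := hE (C b)
    exact ⟨n, hn, by simpa [hiter] using hn'⟩
  refine ⟨fun b j hj => ?_, fun j hj => ?_⟩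
  · rcases hj.eq_or_lt with rfl | hlt
    · rw [← coeffDer_apply, hδ, Derivation.zero_apply]
    · exact h.1 b j hlt
  · rcases hj.eq_or_lt with rfl | hlt
    · exact hc
    · exact h.2 j hlt

lemma IsLND.map_C_eq_zero [IsDomain B] [CharZero B] [Algebra.FiniteType K B]
    (hrigid : ∀ D : Derivation K B B, IsLND D → D = 0)
    {D : Derivation K B[X] B[X]} (hD : IsLND D) (b : B) : D (C b) = 0 := by
  obtain ⟨N, hN⟩ := exists_degBound D
  have h0 : DegBound D 0 := by
    induction N with
    | zero => exact hN
    | succ n ih => exact ih (hN.descend hrigid hD)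
  ext j
  simpa using h0.1 b j (Nat.zero_le j)

lemma map_eq_derivative_mul {D : Derivation K B[X] B[X]} (hC : ∀ b, D (C b) = 0) (f : B[X]) :
    D f = derivative f * D X := by
  induction f using Polynomial.induction_on' with
  | add f g hf hg => simp [hf, hg, add_mul]
  | monomial n b =>
    rw [← C_mul_X_pow_eq_monomial]
    simp only [Derivation.leibniz, Derivation.leibniz_pow, hC, derivative_C_mul_X_pow,
      smul_eq_mul, nsmul_eq_mul, C_mul, C_eq_natCast]
    ring

end Poly

theorem stmt14 {K B : Type*} [Field K] [IsAlgClosed K] [CharZero K]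
    [CommRing B] [IsDomain B] [Algebra K B] [Algebra.FiniteType K B]
    (hrigid : ∀ D : Derivation K B B, IsLND D → D = 0) :
    (HDStar K (Polynomial B) : Set (Polynomial B)) =
      Set.range (Polynomial.C : B → Polynomial B) := by
  have : CharZero B := charZero_of_injective_algebraMap (algebraMap K B).injective
  apply Set.Subset.antisymm
  · have hle : HDStar K B[X] ≤ (CAlgHom (R := K) (A := B)).range := by
      refine Algebra.adjoin_le ?_
      rintro f ⟨D, hD, ⟨s, hs⟩, hf⟩
      have hC := hD.map_C_eq_zero hrigid
      have hX : D X ≠ 0 := by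
        intro h
        rw [map_eq_derivative_mul hC, h, mul_zero] at hs
        exact zero_ne_one hs
      rw [map_eq_derivative_mul hC, mul_eq_zero, or_iff_left hX] at hf
      exact ⟨f.coeff 0, (eq_C_of_derivative_eq_zero hf).symm⟩
    intro f hf
    obtain ⟨b, hb⟩ := hle hf
    exact ⟨b, hb⟩
  · rintro _ ⟨b, rfl⟩
    -- `d/du` is a locally nilpotent derivation with slice `u` and kernel containing `B`.
    refine Algebra.subset_adjoin ⟨(derivative' (R := B)).restrictScalars K, fun f => ?_,
      ⟨X, by simp⟩, by simp⟩
    exact ⟨f.natDegree + 1, by omega,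
      iterate_derivative_eq_zero (Nat.lt_succ_self f.natDegree)⟩
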